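/- arXiv:2105.02135 — 6 statements merged into one kernel-verified Lean document; each statement's English description precedes it below -/
import Mathlib

section
/- There exists a constant C depending only on γ and R_max such that for every k ∈ ℕ and every δ ∈ (0,1), with probability at least 1−δ over all samples ξ_{k,j}, one has max_{x∈X} |V̂_k^{up}(x) − V*(x)| ≤ C [ γ^k · max_{x∈X}|V̂_0^{up}(x) − V*(x)| + max_{x∈X}|V^π(x) − V*(x)| + √( log(|X||A|/δ) / M_1 ) ]. -/
open MeasureTheory

/-- One realization of the approximate UVIP iterates in the tabular case (no
interpolation): `V̂_{k+1}^up(x) = M₂⁻¹ Σ_{j=M₁+1}^{M₁+M₂} max_a { r^a(x) +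
γ ( V̂_k^up(ψ(x,a,ξ_{k,j})) - V^π(ψ(x,a,ξ_{k,j})) + M₁⁻¹ Σ_{ℓ<M₁} V^π(ψ(x,a,ξ_{k,ℓ})) ) }`,
where `ω k j` plays the role of the sample `ξ_{k,j}`. -/
noncomputable def tabIter {X A Ξ : Type} [Fintype A] [Nonempty A]
    (ψ : X → A → Ξ → X) (r : A → X → ℝ) (γ : ℝ) (Vpi : X → ℝ)
    (M1 M2 : ℕ) (V0 : X → ℝ) : ℕ → (ℕ → ℕ → Ξ) → X → ℝ
  | 0, _ => V0
  | k + 1, ω => fun x =>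
      (M2 : ℝ)⁻¹ * ∑ j ∈ Finset.Ico M1 (M1 + M2),
        ⨆ a : A, (r a x + γ * (tabIter ψ r γ Vpi M1 M2 V0 k ω (ψ x a (ω k j)) -
          Vpi (ψ x a (ω k j)) +
          (M1 : ℝ)⁻¹ * ∑ l ∈ Finset.range M1, Vpi (ψ x a (ω k l))))

/-- Extension of finitely many samples to an `ℕ × ℕ`-indexed family (arbitrary values
off the used index range). -/
noncomputable def extendSamples {Ξ : Type} [Nonempty Ξ] (k M : ℕ)
    (ω : Fin k → Fin M → Ξ) : ℕ → ℕ → Ξ := fun i j =>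
  if h : i < k ∧ j < M then ω ⟨i, h.1⟩ ⟨j, h.2⟩ else Classical.arbitrary Ξ

lemma aux_one_sided {Ξ : Type} [MeasurableSpace Ξ] (P : Measure Ξ) [IsProbabilityMeasure P]
    (f : Ξ → ℝ) (hf : Measurable f) (B : ℝ) (hB : 0 ≤ B) (hfB : ∀ ξ, |f ξ| ≤ B) (M1 M2 : ℕ)
    (ε : ℝ) (hε : 0 ≤ ε) :
    (Measure.pi fun _ : Fin (M1 + M2) => P).real
      {ω | ε ≤ ∑ l : Fin M1, (f (ω (Fin.castAdd M2 l)) - ∫ ξ, f ξ ∂P)} ≤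
      Real.exp (-ε ^ 2 / (2 * (M1 * B ^ 2))) := by
  have h1 : ProbabilityTheory.iIndepFun
      (fun (i : Fin (M1 + M2)) (ω : Fin (M1 + M2) → Ξ) => f (ω i) - ∫ ξ, f ξ ∂P)
      (Measure.pi fun _ : Fin (M1 + M2) => P) :=
    ProbabilityTheory.iIndepFun_pi (X := fun _ ξ => f ξ - ∫ ξ, f ξ ∂P)
      (fun _ => (hf.sub_const _).aemeasurable)
  have h2 := h1.precomp (Fin.castAdd_injective M1 M2)
  have h3 := ProbabilityTheory.HasSubgaussianMGF.measure_sum_ge_le_of_iIndepFun h2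
    (c := fun _ => (‖B - (-B)‖₊ / 2) ^ 2) (s := Finset.univ) ?_ hε
  · refine h3.trans (le_of_eq ?_)
    have : |B + B| / 2 = B := by rw [abs_of_nonneg (by linarith)]; ring
    simp [this]
  · intro i _
    have h4 := ProbabilityTheory.hasSubgaussianMGF_of_mem_Icc
      (μ := Measure.pi fun _ : Fin (M1 + M2) => P)
      (X := fun ω => f (ω (Fin.castAdd M2 i))) (a := -B) (b := B)
      (hf.comp (measurable_pi_apply _)).aemeasurable
      (Filter.Eventually.of_forall fun ω => abs_le.1 (hfB _))
    have h5 : ∫ ω : Fin (M1 + M2) → Ξ, f (ω (Fin.castAdd M2 i))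
        ∂(Measure.pi fun _ : Fin (M1 + M2) => P) = ∫ ξ, f ξ ∂P :=
      integral_comp_eval (μ := fun _ : Fin (M1 + M2) => P) hf.aestronglyMeasurable
    rw [h5] at h4
    exact h4

lemma aux_two_sided {Ξ : Type} [MeasurableSpace Ξ] (P : Measure Ξ) [IsProbabilityMeasure P]
    (f : Ξ → ℝ) (hf : Measurable f) (B : ℝ) (hB : 0 ≤ B) (hfB : ∀ ξ, |f ξ| ≤ B) (M1 M2 : ℕ)
    (hM : 1 ≤ M1) (t : ℝ) (ht : 0 ≤ t) :
    (Measure.pi fun _ : Fin (M1 + M2) => P)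
      {ω | t < |(M1 : ℝ)⁻¹ * ∑ l : Fin M1, f (ω (Fin.castAdd M2 l)) - ∫ ξ, f ξ ∂P|} ≤
      ENNReal.ofReal (2 * Real.exp (-(M1 * t ^ 2) / (2 * B ^ 2))) := by
  have hM0 : (0 : ℝ) < M1 := by exact_mod_cast hM
  have a1 := aux_one_sided P f hf B hB hfB M1 M2 (M1 * t) (by positivity)
  have a2 := aux_one_sided P (fun ξ => - f ξ) hf.neg B hB (by simpa using hfB) M1 M2 (M1 * t)
    (by positivity)
  have he : -(M1 * t) ^ 2 / (2 * (M1 * B ^ 2)) = -(M1 * t ^ 2) / (2 * B ^ 2) := by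
    rcases eq_or_ne B 0 with h | h
    · simp [h]
    · field_simp
  rw [he] at a1 a2
  set μ := (Measure.pi fun _ : Fin (M1 + M2) => P)
  rw [← ENNReal.ofReal_toReal (measure_ne_top μ _)]
  apply ENNReal.ofReal_le_ofReal
  change μ.real _ ≤ _
  refine (measureReal_mono (μ := μ) ?_).trans ((measureReal_union_le _ _).trans
    ((add_le_add a1 a2).trans (le_of_eq (two_mul _).symm)))
  intro ω hω
  simp only [Set.mem_ofPred_eq] at hω
  have hk : (M1 : ℝ) * ((M1 : ℝ)⁻¹ * ∑ l : Fin M1, f (ω (Fin.castAdd M2 l)) - ∫ ξ, f ξ ∂P)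
      = ∑ l : Fin M1, f (ω (Fin.castAdd M2 l)) - M1 * ∫ ξ, f ξ ∂P := by
    field_simp
  rcases lt_abs.1 hω with h | h
  · left
    have := mul_le_mul_of_nonneg_left h.le hM0.le
    rw [hk] at this
    simpa [Finset.sum_sub_distrib] using this
  · right
    have := mul_le_mul_of_nonneg_left h.le hM0.le
    rw [mul_neg, hk] at this
    change (M1 : ℝ) * t ≤ ∑ l : Fin M1, (-f (ω (Fin.castAdd M2 l)) - ∫ ξ, -f ξ ∂P)
    rw [integral_neg, Finset.sum_sub_distrib, Finset.sum_neg_distrib]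
    simp only [Finset.sum_const, Finset.card_univ, Fintype.card_fin, nsmul_eq_mul]
    linarith

lemma aux_abs_ciSup_sub {A : Type} [Fintype A] [Nonempty A] (f g : A → ℝ) (c : ℝ)
    (h : ∀ a, |f a - g a| ≤ c) : |(⨆ a, f a) - ⨆ a, g a| ≤ c := by
  rw [abs_le]
  constructor
  · have : (⨆ a, g a) ≤ (⨆ a, f a) + c := ciSup_le fun a => by
      have := le_ciSup (Set.finite_range f).bddAbove a
      have := (abs_le.1 (h a)).1
      linarith
    linarith
  · have : (⨆ a, f a) ≤ (⨆ a, g a) + c := ciSup_le fun a => by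
      have := le_ciSup (Set.finite_range g).bddAbove a
      have := (abs_le.1 (h a)).2
      linarith
    linarith

/-- deterministic step -/
lemma aux_step {X A Ξ : Type} [Fintype X] [Nonempty X] [Fintype A] [Nonempty A]
    [MeasurableSpace X] [MeasurableSingletonClass X] [MeasurableSpace Ξ]
    (P : Measure Ξ) [IsProbabilityMeasure P]
    (ψ : X → A → Ξ → X) (hψ : ∀ x a, Measurable (ψ x a)) (r : A → X → ℝ) (γ : ℝ) (hγ : 0 < γ)
    (Vpi Vstar V0 : X → ℝ)
    (hV : ∀ x, Vstar x = ⨆ a : A, (r a x + γ * ∫ ξ, Vstar (ψ x a ξ) ∂P))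
    (M1 M2 : ℕ) (hM2 : 1 ≤ M2) (D : ℝ) (hD : ∀ x, |Vpi x - Vstar x| ≤ D) (i : ℕ)
    (ω : ℕ → ℕ → Ξ) (u t : ℝ)
    (hu : ∀ x, |tabIter ψ r γ Vpi M1 M2 V0 i ω x - Vstar x| ≤ u)
    (ht : ∀ x a, |(M1 : ℝ)⁻¹ * ∑ l ∈ Finset.range M1, Vpi (ψ x a (ω i l)) -
      ∫ ξ, Vpi (ψ x a ξ) ∂P| ≤ t) (x : X) :
    |tabIter ψ r γ Vpi M1 M2 V0 (i + 1) ω x - Vstar x| ≤ γ * (u + 2 * D + t) := by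
  have hM0 : (0 : ℝ) < M2 := by exact_mod_cast hM2
  have hint : ∀ (W : X → ℝ) (a : A), Integrable (fun ξ => W (ψ x a ξ)) P := by
    intro W a
    obtain ⟨b, hb⟩ := (Set.finite_range fun y => ‖W y‖).bddAbove
    exact Integrable.of_bound
      ((measurable_of_finite W).comp (hψ x a)).aestronglyMeasurable b
      (Filter.Eventually.of_forall fun ξ => hb ⟨_, rfl⟩)
  have hstep : ∀ j, |(⨆ a : A, (r a x + γ * (tabIter ψ r γ Vpi M1 M2 V0 i ω (ψ x a (ω i j)) -
          Vpi (ψ x a (ω i j)) +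
          (M1 : ℝ)⁻¹ * ∑ l ∈ Finset.range M1, Vpi (ψ x a (ω i l))))) - Vstar x| ≤
          γ * (u + 2 * D + t) := by
    intro j
    rw [hV x]
    apply aux_abs_ciSup_sub
    intro a
    have h1 : |∫ ξ, Vpi (ψ x a ξ) ∂P - ∫ ξ, Vstar (ψ x a ξ) ∂P| ≤ D := by
      rw [← integral_sub (hint _ _) (hint _ _)]
      have := norm_integral_le_of_norm_le_const (μ := P) (C := D)
        (f := fun ξ => Vpi (ψ x a ξ) - Vstar (ψ x a ξ))
        (Filter.Eventually.of_forall fun ξ => hD _)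
      simpa using this
    have h2 := hu (ψ x a (ω i j))
    have h3 := hD (ψ x a (ω i j))
    have h4 := ht x a
    rw [add_sub_add_left_eq_sub, ← mul_sub, abs_mul, abs_of_pos hγ]
    apply mul_le_mul_of_nonneg_left _ hγ.le
    rw [abs_le] at *
    constructor <;> linarith
  have e : tabIter ψ r γ Vpi M1 M2 V0 (i + 1) ω x - Vstar x =
      (M2 : ℝ)⁻¹ * ∑ j ∈ Finset.Ico M1 (M1 + M2),
        ((⨆ a : A, (r a x + γ * (tabIter ψ r γ Vpi M1 M2 V0 i ω (ψ x a (ω i j)) -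
          Vpi (ψ x a (ω i j)) +
          (M1 : ℝ)⁻¹ * ∑ l ∈ Finset.range M1, Vpi (ψ x a (ω i l))))) - Vstar x) := by
    rw [Finset.sum_sub_distrib, tabIter]
    simp only [Finset.sum_const, Nat.card_Ico, nsmul_eq_mul, add_tsub_cancel_left]
    rw [mul_sub, inv_mul_cancel_left₀ hM0.ne']
  rw [e, abs_mul, abs_of_pos (inv_pos.2 hM0), inv_mul_le_iff₀ hM0]
  refine (Finset.abs_sum_le_sum_abs _ _).trans ((Finset.sum_le_sum fun j _ => hstep j).trans ?_)
  simp

lemma aux_prob {X A Ξ : Type} [Fintype X] [Nonempty X] [Fintype A] [Nonempty A]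
    [MeasurableSpace X] [MeasurableSingletonClass X] [MeasurableSpace Ξ] [Nonempty Ξ]
    (P : Measure Ξ) [IsProbabilityMeasure P]
    (ψ : X → A → Ξ → X) (hψ : ∀ x a, Measurable (ψ x a))
    (Vpi : X → ℝ) (B : ℝ) (hB : 0 < B) (hV : ∀ x, |Vpi x| ≤ B)
    (M1 M2 k : ℕ) (hM1 : 1 ≤ M1) (δ : ℝ) (hδ : 0 < δ) (hδ1 : δ < 1) :
    ENNReal.ofReal (1 - δ) ≤
      (Measure.pi fun _ : Fin k => Measure.pi fun _ : Fin (M1 + M2) => P)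
        {ω | ∀ i < k, ∀ x a, |(M1 : ℝ)⁻¹ * ∑ l ∈ Finset.range M1,
            Vpi (ψ x a (extendSamples k (M1 + M2) ω i l)) - ∫ ξ, Vpi (ψ x a ξ) ∂P| ≤
            2 * B * ((k : ℝ) - i + 2) * Real.sqrt (Real.log
                    ((Fintype.card X : ℝ) * (Fintype.card A : ℝ) / δ) / M1)} := by
  classical
  have hM0 : (0 : ℝ) < M1 := by exact_mod_cast hM1
  set s := Real.sqrt (Real.log ((Fintype.card X : ℝ) * (Fintype.card A : ℝ) / δ) / M1) with hs
  have hs0 : 0 ≤ s := Real.sqrt_nonneg _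
  set μ := (Measure.pi fun _ : Fin k => Measure.pi fun _ : Fin (M1 + M2) => P) with hμ
  have hext : ∀ (ω : Fin k → Fin (M1 + M2) → Ξ) (i : Fin k) (x : X) (a : A),
      ∑ l ∈ Finset.range M1, Vpi (ψ x a (extendSamples k (M1 + M2) ω i l)) =
      ∑ l : Fin M1, Vpi (ψ x a (ω i (Fin.castAdd M2 l))) := by
    intro ω i x a
    rw [Finset.sum_range]
    refine Finset.sum_congr rfl fun l _ => ?_
    have : (i : ℕ) < k ∧ (l : ℕ) < M1 + M2 := ⟨i.2, by omega⟩
    simp only [extendSamples, this, and_self, dite_true]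
    rfl
  rcases subsingleton_or_nontrivial X with hX | hX
  · have : {ω | ∀ i < k, ∀ x a, |(M1 : ℝ)⁻¹ * ∑ l ∈ Finset.range M1,
            Vpi (ψ x a (extendSamples k (M1 + M2) ω i l)) - ∫ ξ, Vpi (ψ x a ξ) ∂P| ≤
            2 * B * ((k : ℝ) - i + 2) * s} = Set.univ := by
      apply Set.eq_univ_of_forall
      intro ω i hi x a
      have hc : ∀ y, Vpi y = Vpi x := fun y => by rw [Subsingleton.elim y x]
      have hik : (i : ℝ) < k := by exact_mod_cast hi
      have h0 : 0 ≤ 2 * B * ((k : ℝ) - i + 2) * s := by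
        have : 0 ≤ (k : ℝ) - i + 2 := by linarith
        positivity
      simp only [hc]
      simpa [hM0.ne'] using h0
    rw [this, measure_univ]
    exact ENNReal.ofReal_le_one.2 (by linarith)
  set N : ℝ := (Fintype.card X : ℝ) * (Fintype.card A : ℝ) with hN
  have hN2 : 2 ≤ N := by
    have h1 : (2 : ℝ) ≤ Fintype.card X := by exact_mod_cast Fintype.one_lt_card (α := X)
    have h2 : (1 : ℝ) ≤ Fintype.card A := by exact_mod_cast Fintype.card_pos (α := A)
    nlinarith
  have hq : 1 < N / δ := by rw [lt_div_iff₀ hδ]; linarith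
  have hL0 : 0 < Real.log (N / δ) := Real.log_pos hq
  let bad : Fin k → X → A → Set (Fin k → Fin (M1 + M2) → Ξ) := fun i x a =>
    {ω | 2 * B * ((k : ℝ) - (i : ℕ) + 2) * s < |(M1 : ℝ)⁻¹ * ∑ l : Fin M1,
            Vpi (ψ x a (ω i (Fin.castAdd M2 l))) - ∫ ξ, Vpi (ψ x a ξ) ∂P|}
  have hbad : ∀ i x a, μ (bad i x a) ≤ ENNReal.ofReal (δ * (1 / 2) ^ (k - (i : ℕ)) / N) := by
    intro i x a
    have hik : (i : ℝ) < k := by exact_mod_cast i.2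
    have ht0 : 0 ≤ 2 * B * ((k : ℝ) - (i : ℕ) + 2) * s := by
      have : 0 ≤ (k : ℝ) - (i : ℕ) + 2 := by linarith
      positivity
    have h1 := aux_two_sided P (fun ξ => Vpi (ψ x a ξ)) ((measurable_of_finite Vpi).comp (hψ x a))
      B hB.le (fun ξ => hV _) M1 M2 hM1 _ ht0
    have h2 : μ (bad i x a) ≤ (Measure.pi fun _ : Fin (M1 + M2) => P)
      {ω | 2 * B * ((k : ℝ) - (i : ℕ) + 2) * s < |(M1 : ℝ)⁻¹ * ∑ l : Fin M1,
        Vpi (ψ x a (ω (Fin.castAdd M2 l))) - ∫ ξ, Vpi (ψ x a ξ) ∂P|} :=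
      (measurePreserving_eval (fun _ : Fin k => Measure.pi fun _ : Fin (M1 + M2) => P)
        i).measure_preimage_le _
    refine h2.trans (h1.trans (ENNReal.ofReal_le_ofReal ?_))
    obtain ⟨m, hm⟩ : ∃ m, k = i + m := ⟨k - i, by omega⟩
    have hm1 : (k : ℝ) - (i : ℕ) = m := by
      have : (k : ℝ) = (i : ℕ) + m := by exact_mod_cast hm
      linarith
    have hm2 : k - (i : ℕ) = m := by omega
    rw [hm1, hm2]
    have hss : s ^ 2 = Real.log (N / δ) / M1 := Real.sq_sqrt (by positivity)
    have hexp : -(M1 * (2 * B * ((m : ℝ) + 2) * s) ^ 2) / (2 * B ^ 2) =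
        -(2 * ((m : ℝ) + 2) ^ 2 * Real.log (N / δ)) := by
      rw [mul_pow _ s, hss]; field_simp
    rw [hexp]
    have hle : -(2 * ((m : ℝ) + 2) ^ 2 * Real.log (N / δ)) ≤
        ((m + 2 : ℕ) : ℝ) * (-Real.log (N / δ)) := by
      push_cast
      have : (m : ℝ) + 2 ≤ 2 * ((m : ℝ) + 2) ^ 2 := by
        have : (0 : ℝ) ≤ m := Nat.cast_nonneg m
        nlinarith
      nlinarith
    have hE : Real.exp (((m + 2 : ℕ) : ℝ) * (-Real.log (N / δ))) = (δ / N) ^ (m + 2) := by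
      rw [Real.exp_nat_mul, Real.exp_neg, Real.exp_log (by linarith), inv_div]
    have h6 : δ / N ≤ 1 / 2 := by
      rw [div_le_div_iff₀ (by linarith) (by norm_num)]; linarith
    calc 2 * Real.exp (-(2 * ((m : ℝ) + 2) ^ 2 * Real.log (N / δ)))
        ≤ 2 * (δ / N) ^ (m + 2) := by
          rw [← hE]
          exact mul_le_mul_of_nonneg_left (Real.exp_le_exp.2 hle) (by norm_num)
      _ = 2 * (δ / N) * (δ / N) ^ (m + 1) := by ring
      _ ≤ 2 * (δ / N) * (1 / 2) ^ (m + 1) := by gcongr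
      _ = δ * (1 / 2) ^ m / N := by ring
  have hgeo : ∀ n : ℕ, ∑ i : Fin n, (1 / 2 : ℝ) ^ (n - (i : ℕ)) ≤ 1 := by
    intro n
    have : ∑ i : Fin n, (1 / 2 : ℝ) ^ (n - (i : ℕ)) = 1 - (1 / 2) ^ n := by
      induction n with
      | zero => simp
      | succ n ih =>
        rw [Fin.sum_univ_succ]
        simp only [Fin.val_zero, Fin.val_succ, Nat.add_sub_add_right, ih]
        rw [Nat.sub_zero, pow_succ]; ring
    rw [this]
    have : (0 : ℝ) ≤ (1 / 2) ^ n := by positivity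
    linarith
  set G := {ω | ∀ i < k, ∀ x a, |(M1 : ℝ)⁻¹ * ∑ l ∈ Finset.range M1,
            Vpi (ψ x a (extendSamples k (M1 + M2) ω i l)) - ∫ ξ, Vpi (ψ x a ξ) ∂P| ≤
            2 * B * ((k : ℝ) - i + 2) * s} with hG
  have hsub : Gᶜ ⊆ ⋃ i, ⋃ x, ⋃ a, bad i x a := by
    intro ω hω
    simp only [hG, Set.mem_compl_iff, Set.mem_ofPred_eq, not_forall, not_le] at hω
    obtain ⟨i, hi, x, a, h⟩ := hω
    simp only [Set.mem_iUnion]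
    refine ⟨⟨i, hi⟩, x, a, ?_⟩
    have := hext ω ⟨i, hi⟩ x a
    rw [this] at h
    exact h
  have hGc : μ Gᶜ ≤ ENNReal.ofReal δ := by
    calc μ Gᶜ ≤ ∑ i, ∑ x, ∑ a, μ (bad i x a) := by
          refine (measure_mono hsub).trans ((measure_iUnion_fintype_le _ _).trans ?_)
          refine Finset.sum_le_sum fun i _ => (measure_iUnion_fintype_le _ _).trans ?_
          exact Finset.sum_le_sum fun x _ => measure_iUnion_fintype_le _ _
      _ ≤ ∑ i : Fin k, ∑ x : X, ∑ a : A, ENNReal.ofReal (δ * (1 / 2) ^ (k - (i : ℕ)) / N) :=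
          Finset.sum_le_sum fun i _ => Finset.sum_le_sum fun x _ =>
            Finset.sum_le_sum fun a _ => hbad i x a
      _ = ENNReal.ofReal (∑ i : Fin k, ∑ x : X, ∑ a : A, (δ * (1 / 2) ^ (k - (i : ℕ)) / N)) := by
          have hp : ∀ i : Fin k, 0 ≤ δ * (1 / 2) ^ (k - (i : ℕ)) / N := fun i => by positivity
          rw [ENNReal.ofReal_sum_of_nonneg fun i _ =>
            Finset.sum_nonneg fun x _ => Finset.sum_nonneg fun a _ => hp i]
          refine Finset.sum_congr rfl fun i _ => ?_
          rw [ENNReal.ofReal_sum_of_nonneg fun x _ => Finset.sum_nonneg fun a _ => hp i]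
          refine Finset.sum_congr rfl fun x _ => ?_
          rw [ENNReal.ofReal_sum_of_nonneg fun a _ => hp i]
      _ ≤ ENNReal.ofReal δ := by
          apply ENNReal.ofReal_le_ofReal
          have : ∑ i : Fin k, ∑ x : X, ∑ a : A, (δ * (1 / 2) ^ (k - (i : ℕ)) / N) =
              δ * ∑ i : Fin k, (1 / 2 : ℝ) ^ (k - (i : ℕ)) := by
            rw [Finset.mul_sum]
            refine Finset.sum_congr rfl fun i _ => ?_
            simp only [Finset.sum_const, Finset.card_univ, nsmul_eq_mul]
            rw [← mul_assoc, ← hN]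
            field_simp
          rw [this]
          have := hgeo k
          nlinarith
  have h1 : (1 : ENNReal) ≤ μ G + μ Gᶜ := by
    have := measure_union_le (μ := μ) G Gᶜ
    rwa [Set.union_compl_self, measure_univ] at this
  rw [ENNReal.ofReal_sub _ hδ.le, ENNReal.ofReal_one, tsub_le_iff_right]
  exact h1.trans (add_le_add le_rfl hGc)

/-- Corollary 1, tabular case: high-probability bound
`max_x |V̂_k^up(x) - V*(x)| ≤ C [ γ^k max_x |V̂_0^up - V*| + max_x |V^π - V*|
+ √(log(|X||A|/δ)/M₁) ]` with `C` depending only on `γ` and `R_max`. -/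
theorem stmt_1 (γ Rmax : ℝ) (hγ0 : 0 < γ) (hγ1 : γ < 1) (hR : 0 < Rmax) :
    ∃ C : ℝ, 0 < C ∧
      ∀ (X A Ξ : Type)
        [Fintype X] [Nonempty X] [Fintype A] [Nonempty A]
        [MeasurableSpace X] [MeasurableSingletonClass X]
        [MeasurableSpace Ξ] [Nonempty Ξ]
        (P : Measure Ξ) [IsProbabilityMeasure P]
        (ψ : X → A → Ξ → X), (∀ x a, Measurable (ψ x a)) →
      ∀ (r : A → X → ℝ), (∀ a x, |r a x| ≤ Rmax) →
      ∀ (Vpi : X → ℝ), (∀ x, |Vpi x| ≤ Rmax / (1 - γ)) →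
      ∀ (Vstar : X → ℝ),
        (∀ x, Vstar x = ⨆ a : A, (r a x + γ * ∫ ξ, Vstar (ψ x a ξ) ∂P)) →
      ∀ (V0 : X → ℝ) (M1 M2 : ℕ), 1 ≤ M1 → 1 ≤ M2 →
      ∀ (k : ℕ) (δ : ℝ), 0 < δ → δ < 1 →
        ENNReal.ofReal (1 - δ) ≤
          (Measure.pi fun _ : Fin k => Measure.pi fun _ : Fin (M1 + M2) => P)
            {ω | ∀ x : X,
              |tabIter ψ r γ Vpi M1 M2 V0 k (extendSamples k (M1 + M2) ω) x - Vstar x| ≤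
                C * (γ ^ k * (⨆ x' : X, |V0 x' - Vstar x'|) +
                  (⨆ x' : X, |Vpi x' - Vstar x'|) +
                  Real.sqrt (Real.log
                    ((Fintype.card X : ℝ) * (Fintype.card A : ℝ) / δ) / M1))} := by
  have h1γ : 0 < 1 - γ := by linarith
  set B := Rmax / (1 - γ) with hBdef
  have hB : 0 < B := by positivity
  set β := γ / (1 - γ) with hβ
  have hβ0 : 0 < β := by positivity
  have hβe : β = γ * (β + 1) := by rw [hβ]; field_simp; ring
  set η := γ * (β + 3) / (1 - γ) with hη
  have hη0 : 0 < η := by positivity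
  have hηe : η = γ * (η + β + 3) := by rw [hη]; field_simp; ring
  refine ⟨1 + 2 * β + 2 * B * η, by positivity, ?_⟩
  intro X A Ξ _ _ _ _ _ _ _ _ P _ ψ hψ r hr Vpi hVpi Vstar hV V0 M1 M2 hM1 hM2 k δ hδ hδ1
  refine (aux_prob P ψ hψ Vpi B hB hVpi M1 M2 k hM1 δ hδ hδ1).trans (measure_mono ?_)
  intro ω hω
  simp only [Set.mem_ofPred_eq] at hω ⊢
  set s := Real.sqrt (Real.log ((Fintype.card X : ℝ) * (Fintype.card A : ℝ) / δ) / M1) with hs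
  have hs0 : 0 ≤ s := Real.sqrt_nonneg _
  set E := ⨆ x' : X, |V0 x' - Vstar x'| with hE
  set D := ⨆ x' : X, |Vpi x' - Vstar x'| with hD
  have hEx : ∀ x, |V0 x - Vstar x| ≤ E := fun x =>
    le_ciSup (f := fun x' => |V0 x' - Vstar x'|) (Set.finite_range _).bddAbove x
  have hDx : ∀ x, |Vpi x - Vstar x| ≤ D := fun x =>
    le_ciSup (f := fun x' => |Vpi x' - Vstar x'|) (Set.finite_range _).bddAbove x
  have hE0 : 0 ≤ E := (abs_nonneg _).trans (hEx (Classical.arbitrary X))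
  have hD0 : 0 ≤ D := (abs_nonneg _).trans (hDx (Classical.arbitrary X))
  have key : ∀ i, i ≤ k → ∀ x,
      |tabIter ψ r γ Vpi M1 M2 V0 i (extendSamples k (M1 + M2) ω) x - Vstar x| ≤
        γ ^ i * E + 2 * β * D + 2 * B * s * (β * ((k : ℝ) - i) + η) := by
    intro i
    induction i with
    | zero =>
      intro _ x
      have := hEx x
      have h0 : 0 ≤ 2 * β * D + 2 * B * s * (β * ((k : ℝ) - (0 : ℕ)) + η) := by
        simp only [Nat.cast_zero, sub_zero]; positivity
      rw [tabIter, pow_zero, one_mul]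
      linarith
    | succ i ih =>
      intro hi x
      refine (aux_step P ψ hψ r γ hγ0 Vpi Vstar V0 hV M1 M2 hM2 D hDx i _ _ _
        (ih (by omega)) (fun x a => hω i (by omega) x a) x).trans (le_of_eq ?_)
      push_cast
      rw [pow_succ]
      linear_combination (-2 * D - 2 * B * s * ((k : ℝ) - i - 1)) * hβe - 2 * B * s * hηe
  intro x
  refine (key k le_rfl x).trans ?_
  rw [sub_self, mul_zero, zero_add]
  have hg : 0 ≤ γ ^ k * E := by positivity
  have q1 : 0 ≤ (2 * β + 2 * B * η) * (γ ^ k * E) := by positivity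
  have q2 : 0 ≤ (1 + 2 * B * η) * D := by positivity
  have q3 : 0 ≤ (1 + 2 * β) * s := by positivity
  linarith
end

section
/- There exists an absolute constant C such that for every dimension d ≥ 1, every integer N ≥ 2 and every real p ≥ 1, if X_1, …, X_N are i.i.d. uniformly distributed on [0,1]^d, then ( E[ ρ(X_N, X)^p ] )^{1/p} ≤ C √d ( p · log N / N )^{1/d}. -/
open MeasureTheory

/-- The unit cube `[0,1]^d` in Euclidean space. -/
def unitCube (d : ℕ) : Set (EuclideanSpace ℝ (Fin d)) :=
  {y | ∀ i, y i ∈ Set.Icc (0 : ℝ) 1}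

/-- The uniform distribution on `[0,1]^d` (normalized Lebesgue measure). -/
noncomputable def uniformCube (d : ℕ) : Measure (EuclideanSpace ℝ (Fin d)) :=
  volume.restrict (unitCube d)

/-- The covering radius `ρ(X_N, X) = sup_{x ∈ [0,1]^d} min_{k ≤ N} ‖x - X_k‖`. -/
noncomputable def cubeCovRad (d : ℕ) {N : ℕ} (xs : Fin N → EuclideanSpace ℝ (Fin d)) : ℝ :=
  ⨆ x : unitCube d, ⨅ k : Fin N, dist (x : EuclideanSpace ℝ (Fin d)) (xs k)

/-- A closed axis-parallel cube with corner `a` and side `r`. -/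
def cellAux (d : ℕ) (a : Fin d → ℝ) (r : ℝ) : Set (EuclideanSpace ℝ (Fin d)) :=
  {y | ∀ i, y i ∈ Set.Icc (a i) (a i + r)}

lemma cellAux_eq (d : ℕ) (a : Fin d → ℝ) (r : ℝ) :
    cellAux d a r = (WithLp.ofLp : EuclideanSpace ℝ (Fin d) → (Fin d → ℝ)) ⁻¹'
      (Set.univ.pi fun i => Set.Icc (a i) (a i + r)) := by
  ext y; simp only [cellAux, Set.mem_pi, Set.mem_preimage, Set.mem_setOf_eq, Set.mem_univ, true_imp_iff]

lemma cellAux_meas (d : ℕ) (a : Fin d → ℝ) (r : ℝ) : MeasurableSet (cellAux d a r) := by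
  rw [cellAux_eq]
  exact (PiLp.volume_preserving_ofLp (Fin d)).measurable
    (MeasurableSet.univ_pi fun i => measurableSet_Icc)

lemma cellAux_vol (d : ℕ) (a : Fin d → ℝ) (r : ℝ) :
    volume (cellAux d a r) = (ENNReal.ofReal r) ^ d := by
  rw [cellAux_eq, (PiLp.volume_preserving_ofLp (Fin d)).measure_preimage
    (MeasurableSet.univ_pi fun i => measurableSet_Icc).nullMeasurableSet, volume_pi_pi]
  simp

lemma unitCube_eq (d : ℕ) : unitCube d = cellAux d 0 1 := by
  ext y; simp [cellAux, unitCube]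

instance uniformCube_prob (d : ℕ) : IsProbabilityMeasure (uniformCube d) := by
  constructor
  simp [uniformCube, unitCube_eq, cellAux_vol]

lemma cellAux_dist {d : ℕ} {a : Fin d → ℝ} {r : ℝ} (hr : 0 ≤ r) {x y : EuclideanSpace ℝ (Fin d)}
    (hx : x ∈ cellAux d a r) (hy : y ∈ cellAux d a r) : dist x y ≤ Real.sqrt d * r := by
  rw [EuclideanSpace.dist_eq]
  have h : ∑ i, dist (x i) (y i) ^ 2 ≤ d * r ^ 2 := by
    calc ∑ i, dist (x i) (y i) ^ 2 ≤ ∑ i : Fin d, r ^ 2 := by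
          apply Finset.sum_le_sum
          intro i _
          have h1 := hx i
          have h2 := hy i
          simp only [Set.mem_Icc] at h1 h2
          apply pow_le_pow_left₀ dist_nonneg
          rw [Real.dist_eq, abs_le]
          constructor <;> linarith
      _ = d * r ^ 2 := by simp
  calc _ ≤ Real.sqrt (d * r ^ 2) := Real.sqrt_le_sqrt h
    _ = _ := by rw [Real.sqrt_mul (by positivity), Real.sqrt_sq hr]

/-- corner of the `j`-th cell -/
noncomputable def cornerAux {d m : ℕ} (j : Fin d → Fin m) : Fin d → ℝ :=
  fun i => ((j i : ℕ) : ℝ) / m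

lemma exists_cell {d m : ℕ} (hm : 0 < m) {x : EuclideanSpace ℝ (Fin d)} (hx : x ∈ unitCube d) :
    ∃ j : Fin d → Fin m, x ∈ cellAux d (cornerAux j) (1 / m) := by
  have hm' : (0 : ℝ) < m := by exact_mod_cast hm
  have key : ∀ i, ∃ j : Fin m, x i ∈ Set.Icc (((j : ℕ) : ℝ) / m) (((j : ℕ) : ℝ) / m + 1 / m) := by
    intro i
    obtain ⟨h0, h1⟩ := hx i
    by_cases h : x i = 1
    · refine ⟨⟨m - 1, by omega⟩, ?_⟩
      have : ((m - 1 : ℕ) : ℝ) = m - 1 := by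
        rw [Nat.cast_sub hm]; simp
      simp only [this, h, Set.mem_Icc]
      constructor
      · rw [div_le_one hm']; linarith
      · rw [← add_div]; simp [hm'.ne']
    · have hlt : x i < 1 := lt_of_le_of_ne h1 h
      have hf : ⌊(m : ℝ) * x i⌋₊ < m := by
        rw [Nat.floor_lt (by positivity)]
        nlinarith
      refine ⟨⟨_, hf⟩, ?_⟩
      have a1 := Nat.floor_le (show (0 : ℝ) ≤ m * x i by positivity)
      have a2 := Nat.lt_floor_add_one ((m : ℝ) * x i)
      simp only [Set.mem_Icc]
      constructor
      · rw [div_le_iff₀ hm']; linarith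
      · rw [← add_div, le_div_iff₀ hm']; linarith
  choose j hj using key
  exact ⟨j, hj⟩

lemma cell_subset {d m : ℕ} (hm : 0 < m) (j : Fin d → Fin m) :
    cellAux d (cornerAux j) (1 / m) ⊆ unitCube d := by
  have hm' : (0 : ℝ) < m := by exact_mod_cast hm
  intro y hy i
  obtain ⟨h1, h2⟩ := hy i
  have h3 : (0 : ℝ) ≤ cornerAux j i := by unfold cornerAux; positivity
  have h4 : cornerAux j i + 1 / m ≤ 1 := by
    unfold cornerAux
    rw [← add_div, div_le_one hm']
    have := (j i).2
    exact_mod_cast this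
  exact ⟨by linarith, by linarith⟩

lemma covRad_nonneg {d N : ℕ} (xs : Fin N → EuclideanSpace ℝ (Fin d)) : 0 ≤ cubeCovRad d xs :=
  Real.iSup_nonneg fun _ => Real.iInf_nonneg fun _ => dist_nonneg

lemma covRad_le {d N : ℕ} (xs : Fin N → EuclideanSpace ℝ (Fin d)) {b : ℝ} (hb : 0 ≤ b)
    (h : ∀ x ∈ unitCube d, ∃ k, dist x (xs k) ≤ b) : cubeCovRad d xs ≤ b := by
  refine Real.iSup_le (fun x => ?_) hb
  obtain ⟨k, hk⟩ := h x x.2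
  exact (ciInf_le ⟨0, by rintro _ ⟨k, rfl⟩; exact dist_nonneg⟩ k).trans hk

lemma covRad_le_one {d N : ℕ} (hN : 0 < N) (xs : Fin N → EuclideanSpace ℝ (Fin d))
    (h : ∀ k, xs k ∈ unitCube d) : cubeCovRad d xs ≤ Real.sqrt d := by
  refine covRad_le xs (by positivity) fun x hx => ⟨⟨0, hN⟩, ?_⟩
  have h0 := h ⟨0, hN⟩
  rw [unitCube_eq] at hx h0
  simpa using cellAux_dist zero_le_one hx h0

lemma covRad_le_cells {d N m : ℕ} (hm : 0 < m) (xs : Fin N → EuclideanSpace ℝ (Fin d))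
    (h : ∀ j : Fin d → Fin m, ∃ k, xs k ∈ cellAux d (cornerAux j) (1 / m)) :
    cubeCovRad d xs ≤ Real.sqrt d * (1 / m) := by
  refine covRad_le xs (by positivity) fun x hx => ?_
  obtain ⟨j, hj⟩ := exists_cell hm hx
  obtain ⟨k, hk⟩ := h j
  exact ⟨k, cellAux_dist (by positivity) hj hk⟩

/-- event that cell `j` is empty -/
def emptyAux (d N m : ℕ) (j : Fin d → Fin m) : Set (Fin N → EuclideanSpace ℝ (Fin d)) :=
  Set.univ.pi fun _ => (cellAux d (cornerAux j) (1 / m))ᶜ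

lemma emptyAux_meas (d N m : ℕ) (j : Fin d → Fin m) : MeasurableSet (emptyAux d N m j) :=
  MeasurableSet.univ_pi fun _ => (cellAux_meas _ _ _).compl

lemma emptyAux_prob {d N m : ℕ} (hm : 0 < m) (j : Fin d → Fin m) :
    (Measure.pi fun _ : Fin N => uniformCube d).real (emptyAux d N m j)
      = (1 - (1 / (m : ℝ)) ^ d) ^ N := by
  have h1 : (uniformCube d).real (cellAux d (cornerAux j) (1 / m)) = (1 / (m : ℝ)) ^ d := by
    rw [measureReal_def, uniformCube, Measure.restrict_apply (cellAux_meas _ _ _),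
      Set.inter_eq_left.2 (cell_subset hm j), cellAux_vol, ENNReal.toReal_pow,
      ENNReal.toReal_ofReal (by positivity)]
  rw [measureReal_def, emptyAux, Measure.pi_pi, ENNReal.toReal_prod]
  simp only [← measureReal_def, Finset.prod_const, Finset.card_univ, Fintype.card_fin]
  rw [probReal_compl_eq_one_sub (cellAux_meas _ _ _), h1]

lemma ae_mem_cube (d N : ℕ) :
    ∀ᵐ xs ∂(Measure.pi fun _ : Fin N => uniformCube d), ∀ k, xs k ∈ unitCube d := by
  rw [ae_all_iff]
  intro k
  have h : ∀ᵐ x ∂(uniformCube d), x ∈ unitCube d := by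
    apply ae_restrict_mem
    rw [unitCube_eq]; exact cellAux_meas _ _ _
  exact (Measure.tendsto_eval_ae_ae (μ := fun _ : Fin N => uniformCube d) (i := k)).eventually h

lemma int_le_trivial {d N : ℕ} (hN : 0 < N) {p : ℝ} (hp : 1 ≤ p) :
    ∫ xs, cubeCovRad d xs ^ p ∂(Measure.pi fun _ : Fin N => uniformCube d)
      ≤ Real.sqrt d ^ p := by
  calc _ ≤ ∫ xs, Real.sqrt d ^ p ∂(Measure.pi fun _ : Fin N => uniformCube d) := by
        apply integral_mono_of_nonneg
        · exact Filter.Eventually.of_forall fun xs => Real.rpow_nonneg (covRad_nonneg xs) _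
        · exact integrable_const _
        · filter_upwards [ae_mem_cube d N] with xs hxs
          exact Real.rpow_le_rpow (covRad_nonneg xs) (covRad_le_one hN xs hxs) (by linarith)
    _ = _ := by simp

lemma int_le_cells {d N m : ℕ} (hN : 0 < N) (hm : 0 < m) {p : ℝ} (hp : 1 ≤ p) :
    ∫ xs, cubeCovRad d xs ^ p ∂(Measure.pi fun _ : Fin N => uniformCube d)
      ≤ Real.sqrt d ^ p * ((1 / (m : ℝ)) ^ p + (m : ℝ) ^ d * (1 - (1 / (m : ℝ)) ^ d) ^ N) := by
  set P := (Measure.pi fun _ : Fin N => uniformCube d) with hP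
  have hi : ∀ j : Fin d → Fin m,
      Integrable ((emptyAux d N m j).indicator (fun _ => (1 : ℝ))) P := fun j =>
    (integrable_const _).indicator (emptyAux_meas d N m j)
  have hs : Integrable (fun xs => ∑ j, (emptyAux d N m j).indicator (fun _ => (1 : ℝ)) xs) P :=
    integrable_finsetSum _ fun j _ => hi j
  calc _ ≤ ∫ xs, Real.sqrt d ^ p * ((1 / (m : ℝ)) ^ p
          + ∑ j, (emptyAux d N m j).indicator (fun _ => (1 : ℝ)) xs) ∂P := by
        apply integral_mono_of_nonneg
        · exact Filter.Eventually.of_forall fun xs => Real.rpow_nonneg (covRad_nonneg xs) _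
        · exact ((integrable_const _).add hs).const_mul _
        · filter_upwards [ae_mem_cube d N] with xs hxs
          have hnn : ∀ j, 0 ≤ (emptyAux d N m j).indicator (fun _ => (1 : ℝ)) xs :=
            fun j => Set.indicator_nonneg (fun _ _ => zero_le_one) _
          by_cases h : ∀ j : Fin d → Fin m, ∃ k, xs k ∈ cellAux d (cornerAux j) (1 / m)
          · calc cubeCovRad d xs ^ p ≤ (Real.sqrt d * (1 / m)) ^ p :=
                  Real.rpow_le_rpow (covRad_nonneg xs) (covRad_le_cells hm xs h) (by linarith)
              _ = Real.sqrt d ^ p * (1 / (m : ℝ)) ^ p :=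
                  Real.mul_rpow (by positivity) (by positivity)
              _ ≤ _ := by
                  gcongr
                  exact le_add_of_nonneg_right (Finset.sum_nonneg fun j _ => hnn j)
          · push Not at h
            obtain ⟨j, hj⟩ := h
            have h1 : (emptyAux d N m j).indicator (fun _ => (1 : ℝ)) xs = 1 := by
              apply Set.indicator_of_mem
              intro k _
              exact hj k
            have h2 := Finset.single_le_sum (fun j _ => hnn j) (Finset.mem_univ j)
            rw [h1] at h2
            have h3 : (0 : ℝ) ≤ (1 / (m : ℝ)) ^ p := by positivity
            calc cubeCovRad d xs ^ p ≤ (Real.sqrt d) ^ p * 1 := by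
                  rw [mul_one]
                  exact Real.rpow_le_rpow (covRad_nonneg xs) (covRad_le_one hN xs hxs)
                    (by linarith)
              _ ≤ _ := by
                  gcongr
                  linarith
    _ = _ := by
        rw [integral_const_mul, integral_add (integrable_const _) hs,
          integral_finsetSum _ fun j _ => hi j]
        simp only [integral_indicator_const _ (emptyAux_meas d N m _), hP,
          emptyAux_prob hm]
        simp

lemma numeric {d N : ℕ} (hd : 1 ≤ d) (hN : 2 ≤ N) {p : ℝ} (hp : 1 ≤ p)
    (ht : 2 * (p * Real.log N / N) ≤ 1) :
    ∃ m : ℕ, 0 < m ∧ (1 / (m : ℝ)) ^ p + (m : ℝ) ^ d * (1 - (1 / (m : ℝ)) ^ d) ^ N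
      ≤ (6 * (p * Real.log N / N) ^ (1 / (d : ℝ))) ^ p := by
  have hN' : (2 : ℝ) ≤ N := by exact_mod_cast hN
  have hd' : (1 : ℝ) ≤ d := by exact_mod_cast hd
  have hN0 : (0 : ℝ) < N := by linarith
  have hlog : (1 : ℝ) / 2 ≤ Real.log N :=
    le_trans (by have := Real.log_two_gt_d9; linarith) (Real.log_le_log (by norm_num) hN')
  set t := p * Real.log N / N with htdef
  have hpl : 1 / 2 ≤ p * Real.log N := by nlinarith
  have ht0 : 0 < t := by positivity
  have htN : 1 / (N : ℝ) ≤ 2 * t := by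
    rw [htdef, ← mul_div_assoc]
    gcongr; linarith
  set s := t ^ (1 / (d : ℝ)) with hs
  have hs0 : 0 < s := by positivity
  have hts : t ≤ s := by
    calc t = t ^ (1 : ℝ) := (Real.rpow_one t).symm
      _ ≤ s := Real.rpow_le_rpow_of_exponent_ge ht0 (by linarith)
        (by rw [div_le_one (by linarith)]; exact hd')
  set u := (2 * t) ^ (1 / (d : ℝ)) with hu
  have hu0 : 0 < u := by positivity
  have hu1 : u ≤ 1 := Real.rpow_le_one (by positivity) ht (by positivity)
  have hud : u ^ d = 2 * t := by
    rw [hu, one_div, Real.rpow_inv_natCast_pow (by positivity) (by omega)]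
  have hus : u ≤ 2 * s := by
    rw [hu, Real.mul_rpow (by norm_num) ht0.le]
    gcongr
    calc (2 : ℝ) ^ (1 / (d : ℝ)) ≤ 2 ^ (1 : ℝ) :=
          Real.rpow_le_rpow_of_exponent_le (by norm_num)
            (by rw [div_le_one (by linarith)]; exact hd')
      _ = 2 := Real.rpow_one 2
  have hiu : 1 ≤ 1 / u := by rw [le_div_iff₀ hu0]; linarith
  set m := ⌊1 / u⌋₊ with hm
  have hm0 : 0 < m := Nat.floor_pos.2 hiu
  have hm1 : (1 : ℝ) ≤ m := by exact_mod_cast hm0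
  have hmle : (m : ℝ) ≤ 1 / u := Nat.floor_le (by positivity)
  have hmgt : 1 / u < m + 1 := Nat.lt_floor_add_one _
  refine ⟨m, hm0, ?_⟩
  have hA : 1 / (m : ℝ) ≤ 4 * s := by
    have h1 : 1 < (m + 1) * u := by rwa [div_lt_iff₀ hu0] at hmgt
    rw [div_le_iff₀ (by linarith)]
    nlinarith
  have hmd : (2 * t) ≤ (1 / (m : ℝ)) ^ d := by
    rw [← hud]
    gcongr
    rw [le_div_iff₀ (by linarith)]
    rw [le_div_iff₀ hu0] at hmle
    linarith
  have hmd' : (m : ℝ) ^ d ≤ N := by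
    have h1 : 1 / (N : ℝ) ≤ 1 / (m : ℝ) ^ d := by
      rw [← one_div_pow]; linarith
    exact (one_div_le_one_div hN0 (by positivity)).1 h1
  have hone : (1 / (m : ℝ)) ^ d ≤ 1 := pow_le_one₀ (by positivity)
    (by rw [div_le_one (by linarith)]; exact hm1)
  have hB : (1 - (1 / (m : ℝ)) ^ d) ^ N ≤ (N : ℝ) ^ (-(2 * p)) := by
    calc (1 - (1 / (m : ℝ)) ^ d) ^ N ≤ (Real.exp (-(2 * t))) ^ N := by
          apply pow_le_pow_left₀ (by linarith)
          have := Real.add_one_le_exp (-(2 * t))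
          linarith
      _ = (N : ℝ) ^ (-(2 * p)) := by
          rw [← Real.exp_nat_mul, Real.rpow_def_of_pos hN0, htdef]
          congr 1
          field_simp
  have hC : (m : ℝ) ^ d * (1 - (1 / (m : ℝ)) ^ d) ^ N ≤ (2 * s) ^ p := by
    calc (m : ℝ) ^ d * (1 - (1 / (m : ℝ)) ^ d) ^ N ≤ N * (N : ℝ) ^ (-(2 * p)) := by
          apply mul_le_mul hmd' hB _ hN0.le
          apply pow_nonneg; linarith
      _ = (N : ℝ) ^ (1 - 2 * p) := by
          rw [sub_eq_add_neg, Real.rpow_add hN0, Real.rpow_one]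
      _ ≤ (N : ℝ) ^ (-p) :=
          Real.rpow_le_rpow_of_exponent_le (by linarith) (by linarith)
      _ = (1 / (N : ℝ)) ^ p := by
          rw [one_div, Real.inv_rpow hN0.le, Real.rpow_neg hN0.le]
      _ ≤ (2 * s) ^ p :=
          Real.rpow_le_rpow (by positivity) (by linarith) (by linarith)
  calc _ ≤ (4 * s) ^ p + (2 * s) ^ p :=
        add_le_add (Real.rpow_le_rpow (by positivity) hA (by linarith)) hC
    _ ≤ (4 * s + 2 * s) ^ p :=
        Real.add_rpow_le_rpow_add (by positivity) (by positivity) hp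
    _ = _ := by congr 1; ring

/-- there is an absolute constant `C` such that for every `d ≥ 1`, `N ≥ 2`
and `p ≥ 1`, for i.i.d. uniform points on the cube,
`E[ρ(X_N,X)^p]^{1/p} ≤ C √d (p log N / N)^{1/d}`. -/
theorem stmt_6 :
    ∃ C : ℝ, 0 < C ∧ ∀ (d N : ℕ), 1 ≤ d → 2 ≤ N → ∀ p : ℝ, 1 ≤ p →
      (∫ xs, cubeCovRad d xs ^ p ∂(Measure.pi fun _ : Fin N => uniformCube d)) ^ (1 / p) ≤
        C * Real.sqrt d * (p * Real.log N / N) ^ (1 / (d : ℝ)) := by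
  refine ⟨6, by norm_num, fun d N hd hN p hp => ?_⟩
  have hp0 : 0 < p := by linarith
  have hN' : (2 : ℝ) ≤ N := by exact_mod_cast hN
  have hlog : 0 < Real.log N := Real.log_pos (by linarith)
  have ht0 : 0 < p * Real.log N / N := by positivity
  suffices h : (∫ xs, cubeCovRad d xs ^ p ∂(Measure.pi fun _ : Fin N => uniformCube d)) ≤
      (Real.sqrt d * (6 * (p * Real.log N / N) ^ (1 / (d : ℝ)))) ^ p by
    calc _ ≤ ((Real.sqrt d * (6 * (p * Real.log N / N) ^ (1 / (d : ℝ)))) ^ p) ^ (1 / p) := by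
          refine Real.rpow_le_rpow (integral_nonneg fun xs => ?_) h (by positivity)
          exact Real.rpow_nonneg (covRad_nonneg xs) _
      _ = Real.sqrt d * (6 * (p * Real.log N / N) ^ (1 / (d : ℝ))) := by
          rw [one_div p, Real.rpow_rpow_inv (by positivity) hp0.ne']
      _ = _ := by ring
  by_cases ht : 2 * (p * Real.log N / N) ≤ 1
  · obtain ⟨m, hm, hle⟩ := numeric hd hN hp ht
    refine (int_le_cells (by omega) hm hp).trans ?_
    rw [Real.mul_rpow (Real.sqrt_nonneg _) (by positivity)]
    gcongr
  · push Not at ht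
    refine (int_le_trivial (by omega) hp).trans ?_
    apply Real.rpow_le_rpow (by positivity) _ hp0.le
    apply le_mul_of_one_le_right (by positivity)
    have hd' : (1 : ℝ) ≤ d := by exact_mod_cast hd
    have h1 : (1 / 2 : ℝ) ≤ (p * Real.log N / N) ^ (1 / (d : ℝ)) := by
      calc (1 / 2 : ℝ) = (1 / 2) ^ (1 : ℝ) := (Real.rpow_one _).symm
        _ ≤ (1 / 2) ^ (1 / (d : ℝ)) :=
          Real.rpow_le_rpow_of_exponent_ge (by norm_num) (by norm_num)
            (by rw [div_le_one (by linarith)]; exact hd')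
        _ ≤ _ := Real.rpow_le_rpow (by norm_num) (by linarith) (by positivity)
    linarith
end

section
/- Let Φ : X → ℝ be bounded measurable with (P^a Φ)(x) = 0 for all a ∈ A and x ∈ X (a martingale function). If a bounded measurable V^{up} : X → ℝ satisfies V^{up}(x) = ∫_Ξ max_{a∈A} { r^a(x) + γ ( V^{up}(ψ(x,a,ξ)) − Φ(ψ(x,a,ξ)) ) } P_ξ(dξ) for all x ∈ X, then V^{up} is an upper solution to the Bellman optimality equation: V^{up}(x) ≥ max_{a∈A} { r^a(x) + γ (P^a V^{up})(x) } for all x ∈ X. -/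
open MeasureTheory

/-- if `V^up` solves the fixed-point equation
`V^up(x) = ∫ max_a { r^a(x) + γ (V^up(ψ(x,a,ξ)) - Φ(ψ(x,a,ξ))) } dP_ξ`
for a bounded measurable martingale function `Φ` (i.e. `P^a Φ = 0`), then `V^up` is an
upper solution to the Bellman optimality equation. -/
theorem stmt_9 {X A Ξ : Type*} [MeasurableSpace X] [MeasurableSpace A]
    [Fintype A] [Nonempty A] [MeasurableSpace Ξ]
    (P : Measure Ξ) [IsProbabilityMeasure P]
    (ψ : X → A → Ξ → X)
    (hψ : Measurable fun p : (X × A) × Ξ => ψ p.1.1 p.1.2 p.2)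
    (r : A → X → ℝ) (hr_meas : ∀ a, Measurable (r a))
    (hr_bdd : ∀ a, ∃ B : ℝ, ∀ x, |r a x| ≤ B)
    (γ : ℝ) (hγ0 : 0 < γ) (hγ1 : γ < 1)
    (Φ : X → ℝ) (hΦ_meas : Measurable Φ) (hΦ_bdd : ∃ B : ℝ, ∀ x, |Φ x| ≤ B)
    (hΦ_mart : ∀ a x, ∫ ξ, Φ (ψ x a ξ) ∂P = 0)
    (Vup : X → ℝ) (hV_meas : Measurable Vup) (hV_bdd : ∃ B : ℝ, ∀ x, |Vup x| ≤ B)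
    (hfix : ∀ x, Vup x =
      ∫ ξ, (⨆ a : A, (r a x + γ * (Vup (ψ x a ξ) - Φ (ψ x a ξ)))) ∂P) :
    ∀ x, (⨆ a : A, (r a x + γ * ∫ ξ, Vup (ψ x a ξ) ∂P)) ≤ Vup x := by
  intro x
  obtain ⟨B, hB⟩ := hΦ_bdd
  obtain ⟨C, hC⟩ := hV_bdd
  have hm : ∀ a, Measurable (ψ x a) := fun a =>
    hψ.comp (measurable_const.prodMk measurable_id : Measurable fun ξ : Ξ => ((x, a), ξ))
  have hiV : ∀ a, Integrable (fun ξ => Vup (ψ x a ξ)) P := fun a =>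
    Integrable.of_bound (hV_meas.comp (hm a)).aestronglyMeasurable C
      (Filter.Eventually.of_forall fun ξ => hC _)
  have hiΦ : ∀ a, Integrable (fun ξ => Φ (ψ x a ξ)) P := fun a =>
    Integrable.of_bound (hΦ_meas.comp (hm a)).aestronglyMeasurable B
      (Filter.Eventually.of_forall fun ξ => hB _)
  have hi : ∀ a, Integrable (fun ξ => r a x + γ * (Vup (ψ x a ξ) - Φ (ψ x a ξ))) P := fun a =>
    (integrable_const _).add (((hiV a).sub (hiΦ a)).const_mul γ)
  have hsup : Integrable
      (fun ξ => ⨆ a : A, (r a x + γ * (Vup (ψ x a ξ) - Φ (ψ x a ξ)))) P := by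
    refine Integrable.mono'
      (g := fun ξ => ∑ a : A, |r a x + γ * (Vup (ψ x a ξ) - Φ (ψ x a ξ))|)
      (integrable_finsetSum _ fun a _ => (hi a).abs) ?_ ?_
    · refine (Measurable.iSup fun a => ?_).aestronglyMeasurable
      exact (((hV_meas.comp (hm a)).sub (hΦ_meas.comp (hm a))).const_mul γ).const_add _
    · refine Filter.Eventually.of_forall fun ξ => ?_
      obtain ⟨a, ha⟩ := exists_eq_ciSup_of_finite
        (f := fun a : A => r a x + γ * (Vup (ψ x a ξ) - Φ (ψ x a ξ)))
      rw [← ha, Real.norm_eq_abs]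
      exact Finset.single_le_sum
        (f := fun a : A => |r a x + γ * (Vup (ψ x a ξ) - Φ (ψ x a ξ))|)
        (fun _ _ => abs_nonneg _) (Finset.mem_univ a)
  refine ciSup_le fun a => ?_
  have e : ∫ ξ, (r a x + γ * (Vup (ψ x a ξ) - Φ (ψ x a ξ))) ∂P
      = r a x + γ * ∫ ξ, Vup (ψ x a ξ) ∂P := by
    have h1 : Integrable (fun ξ => γ * (Vup (ψ x a ξ) - Φ (ψ x a ξ))) P :=
      ((hiV a).sub (hiΦ a)).const_mul γ
    rw [integral_add (integrable_const _) h1,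
      integral_const_mul, integral_sub (hiV a) (hiΦ a), hΦ_mart]
    simp
  rw [← e, hfix x]
  exact integral_mono (hi a) hsup fun ξ =>
    le_ciSup (f := fun a : A => r a x + γ * (Vup (ψ x a ξ) - Φ (ψ x a ξ)))
      (Set.finite_range _).bddAbove a
end

section
/- Let Φ : X × A × X → ℝ be bounded measurable with ∫_Ξ Φ(x, a, ψ(x,a,ξ)) P_ξ(dξ) = 0 for all x ∈ X and a ∈ A, and define the iterates V_{k+1}(x) = ∫_Ξ max_{a∈A} { r^a(x) + γ ( V_k(ψ(x,a,ξ)) − Φ(x, a, ψ(x,a,ξ)) ) } P_ξ(dξ). If V_0 is bounded measurable with V_0(x) ≥ V*(x) for all x ∈ X, then V_k(x) ≥ V*(x) for all x ∈ X and all k ∈ ℕ. -/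
open MeasureTheory

/-- the iterates `V_{k+1}(x) = ∫ max_a { r^a(x) + γ (V_k(ψ(x,a,ξ)) -
Φ(x,a,ψ(x,a,ξ))) } dP_ξ` with a martingale function `Φ` stay above the optimal value
function `V*` provided `V_0 ≥ V*`. -/
theorem stmt_11 {X A Ξ : Type*} [MeasurableSpace X] [MeasurableSpace A]
    [Fintype A] [Nonempty A] [MeasurableSpace Ξ]
    (P : Measure Ξ) [IsProbabilityMeasure P]
    (ψ : X → A → Ξ → X)
    (hψ : Measurable fun p : (X × A) × Ξ => ψ p.1.1 p.1.2 p.2)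
    (r : A → X → ℝ) (hr_meas : ∀ a, Measurable (r a))
    (hr_bdd : ∀ a, ∃ B : ℝ, ∀ x, |r a x| ≤ B)
    (γ : ℝ) (hγ0 : 0 < γ) (hγ1 : γ < 1)
    (Vstar : X → ℝ) (hVstar_meas : Measurable Vstar)
    (hVstar_bdd : ∃ B : ℝ, ∀ x, |Vstar x| ≤ B)
    (hVstar_fix : ∀ x, Vstar x = ⨆ a : A, (r a x + γ * ∫ ξ, Vstar (ψ x a ξ) ∂P))
    (Φ : X → A → X → ℝ)
    (hΦ_meas : Measurable fun p : (X × A) × X => Φ p.1.1 p.1.2 p.2)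
    (hΦ_bdd : ∃ B : ℝ, ∀ x a y, |Φ x a y| ≤ B)
    (hΦ_mart : ∀ x a, ∫ ξ, Φ x a (ψ x a ξ) ∂P = 0)
    (Vseq : ℕ → X → ℝ)
    (hV0_meas : Measurable (Vseq 0)) (hV0_bdd : ∃ B : ℝ, ∀ x, |Vseq 0 x| ≤ B)
    (hrec : ∀ k x, Vseq (k + 1) x =
      ∫ ξ, (⨆ a : A, (r a x + γ * (Vseq k (ψ x a ξ) - Φ x a (ψ x a ξ)))) ∂P)
    (h0 : ∀ x, Vstar x ≤ Vseq 0 x) :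
    ∀ k x, Vstar x ≤ Vseq k x := by
  obtain ⟨BΦ, hBΦ⟩ := hΦ_bdd
  obtain ⟨Bs, hBs⟩ := hVstar_bdd
  choose Br hBr using hr_bdd
  have hfin : ∀ f : A → ℝ, BddAbove (Set.range f) := fun f => (Set.finite_range f).bddAbove
  have hψa : ∀ a, Measurable fun p : X × Ξ => ψ p.1 a p.2 := fun a =>
    hψ.comp (by fun_prop : Measurable fun p : X × Ξ => ((p.1, a), p.2))
  have hΦa : ∀ a, Measurable fun p : X × Ξ => Φ p.1 a (ψ p.1 a p.2) := fun a =>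
    hΦ_meas.comp ((by fun_prop : Measurable fun p : X × Ξ => (p.1, a)).prodMk (hψa a))
  have key : ∀ k, Measurable (Vseq k) ∧ (∃ B : ℝ, ∀ x, |Vseq k x| ≤ B) ∧
      ∀ x, Vstar x ≤ Vseq k x := by
    intro k
    induction k with
    | zero => exact ⟨hV0_meas, hV0_bdd, h0⟩
    | succ k ih =>
      obtain ⟨hm, ⟨B, hB⟩, hle⟩ := ih
      have hterm : ∀ a, Measurable fun p : X × Ξ =>
          r a p.1 + γ * (Vseq k (ψ p.1 a p.2) - Φ p.1 a (ψ p.1 a p.2)) := fun a =>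
        ((hr_meas a).comp measurable_fst).add
          (((hm.comp (hψa a)).sub (hΦa a)).const_mul γ)
      have hG : Measurable fun p : X × Ξ =>
          ⨆ a : A, (r a p.1 + γ * (Vseq k (ψ p.1 a p.2) - Φ p.1 a (ψ p.1 a p.2))) :=
        Measurable.iSup hterm
      have hbt : ∀ x ξ a, |r a x + γ * (Vseq k (ψ x a ξ) - Φ x a (ψ x a ξ))|
          ≤ (⨆ a, Br a) + γ * (B + BΦ) := by
        intro x ξ a
        have h1 := (hBr a x).trans (le_ciSup (hfin Br) a)
        have h2 : |Vseq k (ψ x a ξ) - Φ x a (ψ x a ξ)| ≤ B + BΦ :=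
          (abs_sub _ _).trans (add_le_add (hB _) (hBΦ _ _ _))
        calc _ ≤ |r a x| + |γ * (Vseq k (ψ x a ξ) - Φ x a (ψ x a ξ))| := abs_add_le _ _
          _ ≤ _ := by
            rw [abs_mul, abs_of_pos hγ0]
            gcongr
      have hbG : ∀ x ξ, |⨆ a : A, (r a x + γ * (Vseq k (ψ x a ξ) - Φ x a (ψ x a ξ)))|
          ≤ (⨆ a, Br a) + γ * (B + BΦ) := by
        intro x ξ
        obtain ⟨a, ha⟩ := exists_eq_ciSup_of_finite
          (f := fun a : A => r a x + γ * (Vseq k (ψ x a ξ) - Φ x a (ψ x a ξ)))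
        rw [← ha]
        exact hbt x ξ a
      have hGi : ∀ x, Integrable (fun ξ =>
          ⨆ a : A, (r a x + γ * (Vseq k (ψ x a ξ) - Φ x a (ψ x a ξ)))) P := fun x =>
        Integrable.of_bound (hG.comp measurable_prodMk_left).aestronglyMeasurable
          _ (Filter.Eventually.of_forall fun ξ => hbG x ξ)
      refine ⟨?_, ⟨(⨆ a, Br a) + γ * (B + BΦ), fun x => ?_⟩, fun x => ?_⟩
      · have := hG.stronglyMeasurable.integral_prod_right' (ν := P)
        rw [show Vseq (k + 1) = _ from funext (hrec k)]
        exact this.measurable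
      · rw [hrec]
        have := norm_integral_le_of_norm_le_const (μ := P)
          (f := fun ξ => ⨆ a : A, (r a x + γ * (Vseq k (ψ x a ξ) - Φ x a (ψ x a ξ))))
          (C := (⨆ a, Br a) + γ * (B + BΦ))
          (Filter.Eventually.of_forall fun ξ => hbG x ξ)
        simpa using this
      · rw [hrec, hVstar_fix]
        refine ciSup_le fun a => ?_
        have hψx : Measurable fun ξ => ψ x a ξ := (hψa a).comp measurable_prodMk_left
        have hiS : Integrable (fun ξ => Vstar (ψ x a ξ)) P :=
          Integrable.of_bound (hVstar_meas.comp hψx).aestronglyMeasurable Bs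
            (Filter.Eventually.of_forall fun ξ => hBs _)
        have hiΦ : Integrable (fun ξ => Φ x a (ψ x a ξ)) P :=
          Integrable.of_bound ((hΦa a).comp measurable_prodMk_left).aestronglyMeasurable BΦ
            (Filter.Eventually.of_forall fun ξ => hBΦ _ _ _)
        have hi : Integrable (fun ξ => γ * (Vstar (ψ x a ξ) - Φ x a (ψ x a ξ))) P :=
          (hiS.sub hiΦ).const_mul γ
        have e : r a x + γ * ∫ ξ, Vstar (ψ x a ξ) ∂P =
            ∫ ξ, (r a x + γ * (Vstar (ψ x a ξ) - Φ x a (ψ x a ξ))) ∂P := by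
          rw [integral_add (integrable_const _) hi, integral_const_mul,
            integral_sub hiS hiΦ, hΦ_mart]
          simp
        rw [e]
        refine integral_mono ((integrable_const _).add hi) (hGi x) fun ξ => ?_
        refine le_trans ?_ (le_ciSup (hfin fun a : A =>
          r a x + γ * (Vseq k (ψ x a ξ) - Φ x a (ψ x a ξ))) a)
        have := hle (ψ x a ξ)
        dsimp only
        gcongr
  exact fun k => (key k).2.2
end

section
/- The UVIP iterates satisfy the supremum-norm recursion ‖V_{k+1}^{up} − V*‖_∞ ≤ γ ‖V_k^{up} − V*‖_∞ + 2γ ‖V^π − V*‖_∞ for every k ∈ ℕ. -/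
open MeasureTheory

lemma abs_iSup_sub_iSup_le {A : Type*} [Fintype A] [Nonempty A] (f g : A → ℝ) (c : ℝ)
    (h : ∀ a, |f a - g a| ≤ c) : |(⨆ a, f a) - ⨆ a, g a| ≤ c := by
  have hf : BddAbove (Set.range f) := (Set.finite_range f).bddAbove
  have hg : BddAbove (Set.range g) := (Set.finite_range g).bddAbove
  rw [abs_le]
  constructor
  · have : (⨆ a, g a) ≤ (⨆ a, f a) + c := ciSup_le fun a => by
      have := le_ciSup hf a
      have := abs_le.1 (h a)
      linarith
    linarith
  · have : (⨆ a, f a) ≤ (⨆ a, g a) + c := ciSup_le fun a => by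
      have := le_ciSup hg a
      have := abs_le.1 (h a)
      linarith
    linarith

lemma integrable_of_bdd {Ξ : Type*} [MeasurableSpace Ξ] (P : Measure Ξ) [IsProbabilityMeasure P]
    (f : Ξ → ℝ) (hf : Measurable f) (B : ℝ) (h : ∀ x, |f x| ≤ B) : Integrable f P :=
  Integrable.of_bound hf.aestronglyMeasurable B (Filter.Eventually.of_forall h)

lemma abs_integral_le_of_bdd {Ξ : Type*} [MeasurableSpace Ξ] (P : Measure Ξ)
    [IsProbabilityMeasure P]
    (f : Ξ → ℝ) (B : ℝ) (h : ∀ x, |f x| ≤ B) : |∫ x, f x ∂P| ≤ B := by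
  have := norm_integral_le_of_norm_le_const (μ := P) (f := f) (C := B)
    (Filter.Eventually.of_forall h)
  simpa using this

/-- the UVIP iterates
`V_{k+1}^up(x) = ∫ max_a { r^a(x) + γ (V_k^up(ψ(x,a,ξ)) - V^π(ψ(x,a,ξ)) + (P^a V^π)(x)) } dP_ξ`
satisfy the sup-norm recursion
`‖V_{k+1}^up - V*‖ ≤ γ ‖V_k^up - V*‖ + 2γ ‖V^π - V*‖`. -/
theorem stmt_12 {X A Ξ : Type*} [MeasurableSpace X] [MeasurableSpace A] [Nonempty X]
    [Fintype A] [Nonempty A] [MeasurableSpace Ξ]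
    (P : Measure Ξ) [IsProbabilityMeasure P]
    (ψ : X → A → Ξ → X)
    (hψ : Measurable fun p : (X × A) × Ξ => ψ p.1.1 p.1.2 p.2)
    (r : A → X → ℝ) (hr_meas : ∀ a, Measurable (r a))
    (hr_bdd : ∀ a, ∃ B : ℝ, ∀ x, |r a x| ≤ B)
    (γ : ℝ) (hγ0 : 0 < γ) (hγ1 : γ < 1)
    (Vstar : X → ℝ) (hVstar_meas : Measurable Vstar)
    (hVstar_bdd : ∃ B : ℝ, ∀ x, |Vstar x| ≤ B)
    (hVstar_fix : ∀ x, Vstar x = ⨆ a : A, (r a x + γ * ∫ ξ, Vstar (ψ x a ξ) ∂P))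
    (Vpi : X → ℝ) (hVpi_meas : Measurable Vpi) (hVpi_bdd : ∃ B : ℝ, ∀ x, |Vpi x| ≤ B)
    (Vup : ℕ → X → ℝ)
    (hV0_meas : Measurable (Vup 0)) (hV0_bdd : ∃ B : ℝ, ∀ x, |Vup 0 x| ≤ B)
    (hrec : ∀ k x, Vup (k + 1) x =
      ∫ ξ, (⨆ a : A, (r a x +
        γ * (Vup k (ψ x a ξ) - Vpi (ψ x a ξ) + ∫ ξ', Vpi (ψ x a ξ') ∂P))) ∂P) :
    ∀ k : ℕ, (⨆ x, |Vup (k + 1) x - Vstar x|) ≤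
      γ * (⨆ x, |Vup k x - Vstar x|) + 2 * γ * ⨆ x, |Vpi x - Vstar x| := by
  have hψa : ∀ a, Measurable fun p : X × Ξ => ψ p.1 a p.2 := fun a =>
    hψ.comp ((measurable_fst.prodMk measurable_const).prodMk measurable_snd)
  have hψx : ∀ x a, Measurable fun ξ => ψ x a ξ := fun x a =>
    (hψa a).comp (measurable_const.prodMk measurable_id)
  obtain ⟨Bs, hBs⟩ := hVstar_bdd
  obtain ⟨Bp, hBp⟩ := hVpi_bdd
  obtain ⟨B0, hB0⟩ := hV0_bdd
  have hmeasF : ∀ U : X → ℝ, Measurable U → Measurable fun p : X × Ξ =>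
      (⨆ a : A, (r a p.1 +
        γ * (U (ψ p.1 a p.2) - Vpi (ψ p.1 a p.2) + ∫ ξ', Vpi (ψ p.1 a ξ') ∂P))) := by
    intro U hU
    refine Measurable.iSup fun a => ?_
    have h1 : Measurable fun x : X => ∫ ξ', Vpi (ψ x a ξ') ∂P :=
      (StronglyMeasurable.integral_prod_right'
        (f := fun p : X × Ξ => Vpi (ψ p.1 a p.2))
        (hVpi_meas.comp (hψa a)).stronglyMeasurable).measurable
    exact ((hr_meas a).comp measurable_fst).add
      ((((hU.comp (hψa a)).sub (hVpi_meas.comp (hψa a))).add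
        (h1.comp measurable_fst)).const_mul γ)
  have hmeas : ∀ k, Measurable (Vup k) := by
    intro k
    induction k with
    | zero => exact hV0_meas
    | succ k ih =>
      have : Vup (k + 1) = fun x => _ := funext (hrec k)
      rw [this]
      exact (StronglyMeasurable.integral_prod_right (hmeasF _ ih).stronglyMeasurable).measurable
  have hstep : ∀ k C E, (∀ x, |Vup k x - Vstar x| ≤ C) → (∀ x, |Vpi x - Vstar x| ≤ E) →
      ∀ x, |Vup (k + 1) x - Vstar x| ≤ γ * C + 2 * γ * E := by
    intro k C E hC hE x
    have hpt : ∀ ξ, |(⨆ a : A, (r a x +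
        γ * (Vup k (ψ x a ξ) - Vpi (ψ x a ξ) + ∫ ξ', Vpi (ψ x a ξ') ∂P))) - Vstar x|
          ≤ γ * C + 2 * γ * E := by
      intro ξ
      rw [hVstar_fix x]
      refine abs_iSup_sub_iSup_le _ _ _ fun a => ?_
      have h3 : |(∫ ξ', Vpi (ψ x a ξ') ∂P) - ∫ ξ', Vstar (ψ x a ξ') ∂P| ≤ E := by
        rw [← integral_sub
          (integrable_of_bdd P (fun ξ => Vpi (ψ x a ξ)) (hVpi_meas.comp (hψx x a)) Bp fun _ => hBp _)
          (integrable_of_bdd P (fun ξ => Vstar (ψ x a ξ)) (hVstar_meas.comp (hψx x a)) Bs fun _ => hBs _)]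
        exact abs_integral_le_of_bdd P _ _ fun ξ' => hE _
      have h1 := abs_le.1 (hC (ψ x a ξ))
      have h2 := abs_le.1 (hE (ψ x a ξ))
      have h3 := abs_le.1 h3
      rw [abs_le]
      constructor <;> nlinarith
    have hint : Integrable (fun ξ => (⨆ a : A, (r a x +
        γ * (Vup k (ψ x a ξ) - Vpi (ψ x a ξ) + ∫ ξ', Vpi (ψ x a ξ') ∂P)))) P := by
      refine integrable_of_bdd P _
        ((hmeasF _ (hmeas k)).comp (measurable_const.prodMk measurable_id))
        (γ * C + 2 * γ * E + Bs) fun ξ => ?_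
      have h1 := abs_le.1 (hpt ξ)
      have h2 := abs_le.1 (hBs x)
      refine abs_le.2 ⟨?_, ?_⟩
      · linarith
      · linarith
    have h := abs_integral_le_of_bdd P _ _ hpt
    rw [integral_sub hint (integrable_const _), ← hrec k x] at h
    simpa using h
  have hE : ∀ x, |Vpi x - Vstar x| ≤ Bp + Bs := fun x =>
    (abs_sub _ _).trans (add_le_add (hBp x) (hBs x))
  have hbdd : ∀ k, ∃ C, ∀ x, |Vup k x - Vstar x| ≤ C := by
    intro k
    induction k with
    | zero => exact ⟨B0 + Bs, fun x => (abs_sub _ _).trans (add_le_add (hB0 x) (hBs x))⟩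
    | succ k ih =>
      obtain ⟨C, hC⟩ := ih
      exact ⟨_, hstep k C _ hC hE⟩
  intro k
  obtain ⟨C, hC⟩ := hbdd k
  refine ciSup_le (hstep k _ _ (fun x => ?_) fun x => ?_)
  · exact le_ciSup (f := fun x => |Vup k x - Vstar x|) ⟨C, by rintro _ ⟨y, rfl⟩; exact hC y⟩ x
  · exact le_ciSup (f := fun x => |Vpi x - Vstar x|) ⟨_, by rintro _ ⟨y, rfl⟩; exact hE y⟩ x
end

section
/- The UVIP iterates satisfy ‖V_k^{up} − V*‖_∞ ≤ γ^k ‖V_0^{up} − V*‖_∞ + 2γ(1−γ)^{−1} ‖V^π − V*‖_∞ for every k ∈ ℕ, and the unique bounded measurable fixed point V^{up} of the UVIP operator satisfies ‖V^{up} − V^π‖_∞ ≤ ( 1 + 2γ(1−γ)^{−1} ) ‖V* − V^π‖_∞. -/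
open MeasureTheory

lemma uvip_int {X Ξ : Type*} [MeasurableSpace X] [MeasurableSpace Ξ]
    (P : Measure Ξ) [IsProbabilityMeasure P] (f : Ξ → X) (hf : Measurable f)
    (V : X → ℝ) (hV : Measurable V) (hb : ∃ B : ℝ, ∀ x, |V x| ≤ B) :
    Integrable (fun ξ => V (f ξ)) P := by
  obtain ⟨B, hB⟩ := hb
  exact Integrable.of_bound (hV.comp hf).aestronglyMeasurable B
    (Filter.Eventually.of_forall fun ξ => hB _)

lemma uvip_step {X A Ξ : Type*} [MeasurableSpace X]
    [Fintype A] [Nonempty A] [MeasurableSpace Ξ]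
    (P : Measure Ξ) [IsProbabilityMeasure P]
    (ψ : X → A → Ξ → X)
    (hψ : ∀ a, Measurable fun p : X × Ξ => ψ p.1 a p.2)
    (r : A → X → ℝ) (hr_meas : ∀ a, Measurable (r a))
    (γ : ℝ) (hγ0 : 0 < γ)
    (Vstar : X → ℝ) (hVstar_meas : Measurable Vstar)
    (hVstar_bdd : ∃ B : ℝ, ∀ x, |Vstar x| ≤ B)
    (hVstar_fix : ∀ x, Vstar x = ⨆ a : A, (r a x + γ * ∫ ξ, Vstar (ψ x a ξ) ∂P))
    (Vpi : X → ℝ) (hVpi_meas : Measurable Vpi) (hVpi_bdd : ∃ B : ℝ, ∀ x, |Vpi x| ≤ B)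
    (V W : X → ℝ) (hV : Measurable V) (D E : ℝ) (hD : ∀ x, |V x - Vstar x| ≤ D)
    (hE : ∀ x, |Vpi x - Vstar x| ≤ E)
    (hW : ∀ x, W x =
      ∫ ξ, (⨆ a : A, (r a x +
        γ * (V (ψ x a ξ) - Vpi (ψ x a ξ) + ∫ ξ', Vpi (ψ x a ξ') ∂P))) ∂P) :
    Measurable W ∧ ∀ x, |W x - Vstar x| ≤ γ * D + 2 * γ * E := by
  have hmeas : Measurable fun p : X × Ξ => (⨆ a : A, (r a p.1 +
        γ * (V (ψ p.1 a p.2) - Vpi (ψ p.1 a p.2) + ∫ ξ', Vpi (ψ p.1 a ξ') ∂P))) := by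
    refine Measurable.iSup fun a => ?_
    have h1 : Measurable fun x : X => ∫ ξ', Vpi (ψ x a ξ') ∂P :=
      (StronglyMeasurable.integral_prod_right
        (f := fun (x : X) (ξ : Ξ) => Vpi (ψ x a ξ))
        (hVpi_meas.comp (hψ a)).stronglyMeasurable).measurable
    exact ((hr_meas a).comp measurable_fst).add
      ((((hV.comp (hψ a)).sub (hVpi_meas.comp (hψ a))).add (h1.comp measurable_fst)).const_mul γ)
  constructor
  · have : W = fun x => _ := funext hW
    rw [this]
    exact (StronglyMeasurable.integral_prod_right hmeas.stronglyMeasurable).measurable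
  · intro x
    have hs : ∀ a, Measurable fun ξ => ψ x a ξ := fun a => (hψ a).comp measurable_prodMk_left
    have hpt : ∀ ξ, |(⨆ a : A, (r a x +
        γ * (V (ψ x a ξ) - Vpi (ψ x a ξ) + ∫ ξ', Vpi (ψ x a ξ') ∂P))) - Vstar x|
        ≤ γ * D + 2 * γ * E := by
      intro ξ
      have hkey : ∀ a, |(r a x +
          γ * (V (ψ x a ξ) - Vpi (ψ x a ξ) + ∫ ξ', Vpi (ψ x a ξ') ∂P)) -
          (r a x + γ * ∫ ξ, Vstar (ψ x a ξ) ∂P)| ≤ γ * D + 2 * γ * E := by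
        intro a
        have hI : |(∫ ξ', Vpi (ψ x a ξ') ∂P) - ∫ ξ, Vstar (ψ x a ξ) ∂P| ≤ E := by
          rw [← integral_sub (uvip_int P _ (hs a) _ hVpi_meas hVpi_bdd)
            (uvip_int P _ (hs a) _ hVstar_meas hVstar_bdd)]
          have := norm_integral_le_of_norm_le_const (μ := P)
            (f := fun ξ => Vpi (ψ x a ξ) - Vstar (ψ x a ξ)) (C := E)
            (Filter.Eventually.of_forall fun ξ => hE _)
          simpa using this
        have h1 := abs_le.1 (hD (ψ x a ξ))
        have h2 := abs_le.1 (hE (ψ x a ξ))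
        have h3 := abs_le.1 hI
        have : |V (ψ x a ξ) - Vpi (ψ x a ξ) + (∫ ξ', Vpi (ψ x a ξ') ∂P)
            - ∫ ξ, Vstar (ψ x a ξ) ∂P| ≤ D + 2 * E := by
          rw [abs_le]; constructor <;> linarith
        rw [add_sub_add_left_eq_sub, ← mul_sub, abs_mul, abs_of_pos hγ0]
        nlinarith
      rw [hVstar_fix x, abs_le]
      constructor
      · rw [neg_le_sub_iff_le_add]
        refine ciSup_le fun a => ?_
        have h1 := (abs_le.1 (hkey a)).1
        have h2 := le_ciSup (Set.finite_range fun a => (r a x +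
          γ * (V (ψ x a ξ) - Vpi (ψ x a ξ) + ∫ ξ', Vpi (ψ x a ξ') ∂P))).bddAbove a
        linarith
      · rw [sub_le_iff_le_add]
        refine ciSup_le fun a => ?_
        have h1 := (abs_le.1 (hkey a)).2
        have h2 := le_ciSup (Set.finite_range fun a =>
          (r a x + γ * ∫ ξ, Vstar (ψ x a ξ) ∂P)).bddAbove a
        linarith
    have hint : Integrable (fun ξ => ⨆ a : A, (r a x +
        γ * (V (ψ x a ξ) - Vpi (ψ x a ξ) + ∫ ξ', Vpi (ψ x a ξ') ∂P))) P := by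
      refine Integrable.of_bound (hmeas.comp measurable_prodMk_left).aestronglyMeasurable
        (γ * D + 2 * γ * E + |Vstar x|) (Filter.Eventually.of_forall fun ξ => ?_)
      have h1 := hpt ξ
      have h2 := abs_sub_abs_le_abs_sub (⨆ a : A, (r a x +
        γ * (V (ψ x a ξ) - Vpi (ψ x a ξ) + ∫ ξ', Vpi (ψ x a ξ') ∂P))) (Vstar x)
      rw [Real.norm_eq_abs]
      linarith
    have h := norm_integral_le_of_norm_le_const (μ := P)
      (f := fun ξ => (⨆ a : A, (r a x +
        γ * (V (ψ x a ξ) - Vpi (ψ x a ξ) + ∫ ξ', Vpi (ψ x a ξ') ∂P))) - Vstar x)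
      (C := γ * D + 2 * γ * E) (Filter.Eventually.of_forall hpt)
    rw [integral_sub hint (integrable_const _)] at h
    rw [hW x]
    simpa using h

lemma uvip_bdd {X : Type*} (f g : X → ℝ) (hf : ∃ B : ℝ, ∀ x, |f x| ≤ B)
    (hg : ∃ B : ℝ, ∀ x, |g x| ≤ B) : ∀ x, |f x - g x| ≤ ⨆ x, |f x - g x| := by
  obtain ⟨B, hB⟩ := hf
  obtain ⟨C, hC⟩ := hg
  intro x
  refine le_ciSup (f := fun x => |f x - g x|) ⟨B + C, ?_⟩ x
  rintro _ ⟨y, rfl⟩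
  exact (abs_sub _ _).trans (add_le_add (hB y) (hC y))

/-- geometric convergence of the UVIP iterates towards `V*` up to a
`2γ(1-γ)⁻¹ ‖V^π - V*‖` term, and the bound
`‖V^up - V^π‖ ≤ (1 + 2γ(1-γ)⁻¹) ‖V* - V^π‖` for the UVIP fixed point `V^up`. -/
theorem stmt_13 {X A Ξ : Type*} [MeasurableSpace X] [MeasurableSpace A] [Nonempty X]
    [Fintype A] [Nonempty A] [MeasurableSpace Ξ]
    (P : Measure Ξ) [IsProbabilityMeasure P]
    (ψ : X → A → Ξ → X)
    (hψ : Measurable fun p : (X × A) × Ξ => ψ p.1.1 p.1.2 p.2)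
    (r : A → X → ℝ) (hr_meas : ∀ a, Measurable (r a))
    (hr_bdd : ∀ a, ∃ B : ℝ, ∀ x, |r a x| ≤ B)
    (γ : ℝ) (hγ0 : 0 < γ) (hγ1 : γ < 1)
    (Vstar : X → ℝ) (hVstar_meas : Measurable Vstar)
    (hVstar_bdd : ∃ B : ℝ, ∀ x, |Vstar x| ≤ B)
    (hVstar_fix : ∀ x, Vstar x = ⨆ a : A, (r a x + γ * ∫ ξ, Vstar (ψ x a ξ) ∂P))
    (Vpi : X → ℝ) (hVpi_meas : Measurable Vpi) (hVpi_bdd : ∃ B : ℝ, ∀ x, |Vpi x| ≤ B)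
    -- the UVIP iterates
    (Vup : ℕ → X → ℝ)
    (hV0_meas : Measurable (Vup 0)) (hV0_bdd : ∃ B : ℝ, ∀ x, |Vup 0 x| ≤ B)
    (hrec : ∀ k x, Vup (k + 1) x =
      ∫ ξ, (⨆ a : A, (r a x +
        γ * (Vup k (ψ x a ξ) - Vpi (ψ x a ξ) + ∫ ξ', Vpi (ψ x a ξ') ∂P))) ∂P)
    -- the fixed point of the UVIP operator
    (Vupfix : X → ℝ) (hfix_meas : Measurable Vupfix)
    (hfix_bdd : ∃ B : ℝ, ∀ x, |Vupfix x| ≤ B)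
    (hfix : ∀ x, Vupfix x =
      ∫ ξ, (⨆ a : A, (r a x +
        γ * (Vupfix (ψ x a ξ) - Vpi (ψ x a ξ) + ∫ ξ', Vpi (ψ x a ξ') ∂P))) ∂P) :
    (∀ k : ℕ, (⨆ x, |Vup k x - Vstar x|) ≤
      γ ^ k * (⨆ x, |Vup 0 x - Vstar x|) + 2 * γ / (1 - γ) * ⨆ x, |Vpi x - Vstar x|) ∧
    (⨆ x, |Vupfix x - Vpi x|) ≤ (1 + 2 * γ / (1 - γ)) * ⨆ x, |Vstar x - Vpi x| := by
  have hψ' : ∀ a, Measurable fun p : X × Ξ => ψ p.1 a p.2 := fun a =>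
    hψ.comp ((measurable_fst.prodMk measurable_const).prodMk measurable_snd)
  have hE := uvip_bdd Vpi Vstar hVpi_bdd hVstar_bdd
  have h0 := uvip_bdd (Vup 0) Vstar hV0_bdd hVstar_bdd
  have hF := uvip_bdd Vupfix Vstar hfix_bdd hVstar_bdd
  have hsymm : (⨆ x, |Vstar x - Vpi x|) = ⨆ x, |Vpi x - Vstar x| := by
    simp_rw [abs_sub_comm]
  rw [hsymm]
  set E := ⨆ x, |Vpi x - Vstar x|
  set D := ⨆ x, |Vup 0 x - Vstar x|
  set F := ⨆ x, |Vupfix x - Vstar x| with hFdef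
  have hg : 0 < 1 - γ := by linarith
  have hE0 : 0 ≤ E := (abs_nonneg _).trans (hE (Classical.arbitrary X))
  constructor
  · have key : ∀ k, Measurable (Vup k) ∧
        ∀ x, |Vup k x - Vstar x| ≤ γ ^ k * D + 2 * γ / (1 - γ) * E := by
      intro k
      induction k with
      | zero =>
        refine ⟨hV0_meas, fun x => ?_⟩
        have : 0 ≤ 2 * γ / (1 - γ) * E := by positivity
        have := h0 x
        rw [pow_zero, one_mul]
        linarith
      | succ k ih =>
        have := uvip_step P ψ hψ' r hr_meas γ hγ0 Vstar hVstar_meas hVstar_bdd hVstar_fix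
          Vpi hVpi_meas hVpi_bdd (Vup k) (Vup (k + 1)) ih.1 _ E ih.2 hE (hrec k)
        refine ⟨this.1, fun x => (this.2 x).trans (le_of_eq ?_)⟩
        field_simp
        ring
    exact fun k => ciSup_le (key k).2
  · have h := uvip_step P ψ hψ' r hr_meas γ hγ0 Vstar hVstar_meas hVstar_bdd hVstar_fix
      Vpi hVpi_meas hVpi_bdd Vupfix Vupfix hfix_meas F E hF hE hfix
    have h1 : F ≤ γ * F + 2 * γ * E := ciSup_le h.2
    have h2 : F ≤ 2 * γ / (1 - γ) * E := by
      rw [div_mul_eq_mul_div, le_div_iff₀ hg]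
      linarith
    refine ciSup_le fun x => ?_
    have h3 := abs_le.1 (hF x)
    have h4 := abs_le.1 (hE x)
    rw [abs_le]
    constructor <;> linarith
end
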